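/- arXiv:1502.02148 — 2 statements merged into one kernel-verified Lean document; each statement's English description precedes it below -/
import Mathlib

section
/- There exists a constant C > 0 such that for every real x ≥ 1, the number of pairs (I, J) of nonzero ideals of ℤ[i] with N(I) ≤ x and N(J) ≤ x differs from π²x²/16 by at most C·x^(4/3). -/
open Real

/-- The absolute norm of an ideal of `ℤ[i]`: the cardinality of the quotient ring. -/
noncomputable def normI (I : Ideal GaussianInt) : ℕ := Nat.card (GaussianInt ⧸ I)

/-- `P x` : pairs of nonzero ideals of `ℤ[i]` with both norms at most `x`. -/
noncomputable def P (x : ℝ) : Set (Ideal GaussianInt × Ideal GaussianInt) :=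
  {p | p.1 ≠ ⊥ ∧ p.2 ≠ ⊥ ∧ (normI p.1 : ℝ) ≤ x ∧ (normI p.2 : ℝ) ≤ x}

/-!
A nonzero ideal of `ℤ[i]` has a unique generator `a + bi` with `a ≥ 1` and `b ≥ 0`, and its norm is
`a² + b²`. So `P x` has `N²` elements, where `N` counts the lattice points in a quarter disc of
radius `r = √x`, and the claim reduces to Sierpiński's bound `N = πr²/4 + O(r^(2/3))`.

Cutting the quarter disc along its diagonal expresses `N` through the sum of `⌊√(r² - n²)⌋` over
`n ≤ r/√2`. The trapezoidal rule evaluates the sum of `√(r² - n²)`. For the fractional parts, the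
periodic Bernoulli function satisfies `B₂({t + δ}) ≤ B₂({t}) + 2δ({t} - 1/2) + δ²` for `δ` of either
sign; taking `δ = ±1/H` bounds a sum of `{t} - 1/2` by differences of the absolutely convergent
Fourier series of `B₂`, hence by the exponential sums `∑ e(h√(r² - n²))`. These are `O(√(rh))` by
van der Corput's second difference test, and `H ≍ r^(1/3)` balances the error terms.
-/

open Finset FourierTransform fwdDiff

/-! ### The Kusmin–Landau inequality -/

section KusminLandau

lemma fourierChar_intCast (k : ℤ) : 𝐞 (k : ℝ) = 1 := by
  ext
  simp only [fourierChar_apply, Circle.coe_one]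
  exact Complex.exp_eq_one_iff.mpr ⟨k, by push_cast; ring⟩

lemma norm_fourierChar_sub_one_le (t : ℝ) : ‖(𝐞 t : ℂ) - 1‖ ≤ 2 * π * |t| := by
  have h := Real.norm_exp_I_mul_ofReal_sub_one_le (x := 2 * π * t)
  rwa [mul_comm Complex.I, Real.norm_eq_abs, abs_mul, abs_of_pos two_pi_pos,
    ← fourierChar_apply] at h

lemma norm_one_sub_fourierChar (t : ℝ) : ‖1 - (𝐞 t : ℂ)‖ = 2 * |sin (π * t)| := by
  have h := Complex.norm_exp_I_mul_ofReal_sub_one (2 * π * t)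
  rwa [mul_comm Complex.I, ← fourierChar_apply, norm_sub_rev, norm_mul, Real.norm_eq_abs,
    abs_two, Real.norm_eq_abs, mul_assoc, mul_div_cancel_left₀ _ two_ne_zero] at h

lemma inv_one_sub_fourierChar {t : ℝ} (ht : sin (π * t) ≠ 0) :
    (1 - (𝐞 t : ℂ))⁻¹ = 1 / 2 + (cot (π * t) / 2 : ℝ) * Complex.I := by
  have hexp : (𝐞 t : ℂ) = (cos (π * t) + sin (π * t) * Complex.I) ^ 2 := by
    rw [fourierChar_apply, Complex.ofReal_cos, Complex.ofReal_sin, ← Complex.exp_mul_I,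
      ← Complex.exp_nat_mul]
    push_cast
    ring_nf
  have hpyth : (sin (π * t) : ℂ) ^ 2 + (cos (π * t) : ℂ) ^ 2 = 1 :=
    mod_cast sin_sq_add_cos_sq (π * t)
  have hsin : (sin (π * t) : ℂ) ≠ 0 := mod_cast ht
  refine inv_eq_of_mul_eq_one_right ?_
  rw [hexp, cot_eq_cos_div_sin, Complex.ofReal_div, Complex.ofReal_div]
  generalize (sin (π * t) : ℂ) = s at *
  generalize (cos (π * t) : ℂ) = c at *
  push_cast
  field_simp
  linear_combination (s - c * Complex.I) * hpyth -
    (2 * c ^ 2 * s + s ^ 3 + s ^ 2 * c * Complex.I) * Complex.I_sq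

lemma antitoneOn_cot : AntitoneOn cot (Set.Ioo 0 π) := by
  intro x hx y hy hxy
  have hsx := sin_pos_of_mem_Ioo hx
  have hsy := sin_pos_of_mem_Ioo hy
  have hsub : 0 ≤ sin (y - x) := sin_nonneg_of_mem_Icc ⟨by linarith, by linarith [hx.1, hy.2]⟩
  rw [sin_sub] at hsub
  rw [cot_eq_cos_div_sin, cot_eq_cos_div_sin, div_le_div_iff₀ hsy hsx]
  linarith

lemma two_mul_le_sin_pi_mul {θ t : ℝ} (hθ : 0 ≤ θ) (ht : t ∈ Set.Icc θ (1 - θ)) :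
    2 * θ ≤ sin (π * t) := by
  wlog h : t ≤ 1 / 2 generalizing t
  · rw [← sin_pi_sub, show π - π * t = π * (1 - t) by ring]
    exact this ⟨by linarith [ht.2], by linarith [ht.1]⟩ (by linarith)
  have h2 := mul_le_sin (x := π * t) (mul_nonneg pi_pos.le (hθ.trans ht.1)) (by nlinarith [pi_pos])
  rw [show 2 / π * (π * t) = 2 * t by field_simp] at h2
  linarith [ht.1]

lemma sum_Ico_sub_mul_eq {R : Type*} [CommRing R] (z c : ℕ → R) {a b : ℕ} (hab : a ≤ b) :
    ∑ n ∈ Ico a (b + 1), (z n - z (n + 1)) * c n =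
      z a * c a - z (b + 1) * c b + ∑ n ∈ Ico a b, z (n + 1) * (c (n + 1) - c n) := by
  induction b, hab using Nat.le_induction with
  | base => simp; ring
  | succ b hab ih =>
    rw [sum_Ico_succ_top (by lia), ih, sum_Ico_succ_top hab]
    ring

lemma norm_sum_Ico_sub_mul_le {R : Type*} [NormedCommRing R] {z : ℕ → R} (c : ℕ → R)
    (hz : ∀ n, ‖z n‖ ≤ 1) {a b : ℕ} (hab : a ≤ b) :
    ‖∑ n ∈ Ico a (b + 1), (z n - z (n + 1)) * c n‖ ≤
      ‖c a‖ + ‖c b‖ + ∑ n ∈ Ico a b, ‖c (n + 1) - c n‖ := by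
  have hmul (n : ℕ) (w : R) : ‖z n * w‖ ≤ ‖w‖ :=
    (norm_mul_le _ _).trans (mul_le_of_le_one_left (norm_nonneg w) (hz n))
  rw [sum_Ico_sub_mul_eq z c hab]
  refine (norm_add_le _ _).trans (add_le_add ((norm_sub_le _ _).trans ?_) (norm_sum_le_of_le _ ?_))
  · exact add_le_add (hmul _ _) (hmul _ _)
  · exact fun n _ ↦ hmul _ _

lemma one_sub_fourierChar_ne_zero {θ t : ℝ} (hθ : 0 < θ) (ht : t ∈ Set.Icc θ (1 - θ)) :
    1 - (𝐞 t : ℂ) ≠ 0 := by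
  have hsin := two_mul_le_sin_pi_mul hθ.le ht
  rw [← norm_pos_iff, norm_one_sub_fourierChar, abs_of_nonneg (by linarith)]
  linarith

lemma norm_inv_one_sub_fourierChar_le {θ t : ℝ} (hθ : 0 < θ) (ht : t ∈ Set.Icc θ (1 - θ)) :
    ‖(1 - (𝐞 t : ℂ))⁻¹‖ ≤ 1 / (4 * θ) := by
  have hsin := two_mul_le_sin_pi_mul hθ.le ht
  rw [norm_inv, norm_one_sub_fourierChar, abs_of_nonneg (by linarith), ← one_div]
  exact one_div_le_one_div_of_le (by positivity) (by linarith)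

lemma abs_cot_pi_mul_le {θ t : ℝ} (hθ : 0 < θ) (ht : t ∈ Set.Icc θ (1 - θ)) :
    |cot (π * t)| ≤ 1 / (2 * θ) := by
  have hsin := two_mul_le_sin_pi_mul hθ.le ht
  rw [cot_eq_cos_div_sin, abs_div, abs_of_pos (by linarith : 0 < sin (π * t))]
  exact div_le_div₀ zero_le_one (abs_cos_le_one _) (by positivity) hsin

lemma norm_inv_one_sub_fourierChar_sub {s t : ℝ} (hs : s ∈ Set.Ioo 0 1) (ht : t ∈ Set.Ioo 0 1)
    (hst : s ≤ t) :
    ‖(1 - (𝐞 t : ℂ))⁻¹ - (1 - (𝐞 s : ℂ))⁻¹‖ = (cot (π * s) - cot (π * t)) / 2 := by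
  have hpi {u : ℝ} (hu : u ∈ Set.Ioo 0 1) : π * u ∈ Set.Ioo 0 π :=
    ⟨mul_pos pi_pos hu.1, mul_lt_of_lt_one_right pi_pos hu.2⟩
  have hcot := antitoneOn_cot (hpi hs) (hpi ht) (by gcongr)
  rw [inv_one_sub_fourierChar (sin_pos_of_mem_Ioo (hpi hs)).ne',
    inv_one_sub_fourierChar (sin_pos_of_mem_Ioo (hpi ht)).ne', add_sub_add_left_eq_sub,
    ← sub_mul, ← Complex.ofReal_sub, norm_mul, Complex.norm_I, mul_one, Complex.norm_real,
    Real.norm_eq_abs, abs_sub_comm, abs_of_nonneg (by linarith)]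
  ring

lemma sum_norm_inv_one_sub_fourierChar_sub {g : ℕ → ℝ} {a b : ℕ} (hab : a ≤ b)
    (hmono : MonotoneOn g (Set.Icc a b)) (hg : ∀ n ∈ Set.Icc a b, g n ∈ Set.Ioo 0 1) :
    ∑ n ∈ Ico a b, ‖(1 - (𝐞 (g (n + 1)) : ℂ))⁻¹ - (1 - (𝐞 (g n) : ℂ))⁻¹‖ =
      (cot (π * g a) - cot (π * g b)) / 2 := by
  have hstep : ∀ n ∈ Ico a b, ‖(1 - (𝐞 (g (n + 1)) : ℂ))⁻¹ - (1 - (𝐞 (g n) : ℂ))⁻¹‖ =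
      -(cot (π * g (n + 1)) / 2) - -(cot (π * g n) / 2) := by
    intro n hn
    have hn' := mem_Ico.mp hn
    have h0 : n ∈ Set.Icc a b := ⟨hn'.1, hn'.2.le⟩
    have h1 : n + 1 ∈ Set.Icc a b := ⟨by lia, hn'.2⟩
    rw [norm_inv_one_sub_fourierChar_sub (hg n h0) (hg _ h1) (hmono h0 h1 n.le_succ)]
    ring
  rw [sum_congr rfl hstep, sum_Ico_sub (fun n ↦ -(cot (π * g n) / 2)) hab]
  ring

lemma fourierChar_eq_sub_mul_inv {t : ℝ} (ht : 1 - (𝐞 t : ℂ) ≠ 0) (x : ℝ) :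
    (𝐞 x : ℂ) = (𝐞 x - 𝐞 (x + t)) * (1 - (𝐞 t : ℂ))⁻¹ := by
  rw [eq_mul_inv_iff_mul_eq₀ ht, mul_sub, mul_one, ← Circle.coe_mul, ← AddChar.map_add_eq_mul]

variable {F : ℕ → ℝ} {a b : ℕ} {θ : ℝ}

lemma norm_sum_fourierChar_le_of_fwdDiff_mem_Icc_zero (hθ : 0 < θ)
    (hmono : MonotoneOn (Δ_[1] F) (Set.Ico a b))
    (hF : ∀ n ∈ Set.Ico a b, Δ_[1] F n ∈ Set.Icc θ (1 - θ)) :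
    ‖∑ n ∈ Ico a b, (𝐞 (F n) : ℂ)‖ ≤ 1 / θ := by
  obtain hba | hab := le_or_gt b a
  · simp only [Ico_eq_empty_of_le hba, sum_empty, norm_zero]
    positivity
  obtain ⟨m, rfl⟩ : ∃ m, b = m + 1 := ⟨b - 1, by lia⟩
  have ham : a ≤ m := by lia
  have hIcc : Set.Icc a m = Set.Ico a (m + 1) := by ext; simp
  rw [← hIcc] at hmono hF
  have hFa := hF a ⟨le_rfl, ham⟩
  have hFm := hF m ⟨ham, le_rfl⟩
  let c (n : ℕ) : ℂ := (1 - (𝐞 (Δ_[1] F n) : ℂ))⁻¹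
  have hsummand : ∀ n ∈ Ico a (m + 1), (𝐞 (F n) : ℂ) = (𝐞 (F n) - 𝐞 (F (n + 1))) * c n := by
    intro n hn
    have hn' : n ∈ Set.Icc a m := hIcc ▸ mem_Ico.mp hn
    simpa only [c, fwdDiff, add_sub_cancel] using
      fourierChar_eq_sub_mul_inv (one_sub_fourierChar_ne_zero hθ (hF n hn')) (F n)
  have hvar : ∑ n ∈ Ico a m, ‖c (n + 1) - c n‖ =
      (cot (π * Δ_[1] F a) - cot (π * Δ_[1] F m)) / 2 :=
    sum_norm_inv_one_sub_fourierChar_sub ham hmono fun n hn ↦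
      ⟨hθ.trans_le (hF n hn).1, (hF n hn).2.trans_lt (by linarith)⟩
  rw [sum_congr rfl hsummand]
  calc ‖∑ n ∈ Ico a (m + 1), ((𝐞 (F n) : ℂ) - 𝐞 (F (n + 1))) * c n‖
      ≤ ‖c a‖ + ‖c m‖ + ∑ n ∈ Ico a m, ‖c (n + 1) - c n‖ :=
        norm_sum_Ico_sub_mul_le (z := fun n ↦ (𝐞 (F n) : ℂ)) c
          (fun n ↦ (Circle.norm_coe _).le) ham
    _ ≤ 1 / (4 * θ) + 1 / (4 * θ) + (1 / (2 * θ) + 1 / (2 * θ)) / 2 := by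
        have hcot := (le_abs_self _).trans (abs_cot_pi_mul_le hθ hFa)
        have hcot' := neg_le_of_abs_le (abs_cot_pi_mul_le hθ hFm)
        rw [hvar]
        exact add_le_add (add_le_add (norm_inv_one_sub_fourierChar_le hθ hFa)
          (norm_inv_one_sub_fourierChar_le hθ hFm)) (by linarith)
    _ = 1 / θ := by
        field_simp
        norm_num

theorem norm_sum_fourierChar_le_of_fwdDiff_mem_Icc (k : ℤ) (hθ : 0 < θ)
    (hmono : MonotoneOn (Δ_[1] F) (Set.Ico a b))
    (hF : ∀ n ∈ Set.Ico a b, Δ_[1] F n ∈ Set.Icc (k + θ) (k + 1 - θ)) :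
    ‖∑ n ∈ Ico a b, (𝐞 (F n) : ℂ)‖ ≤ 1 / θ := by
  have hshift (n : ℕ) : Δ_[1] (fun n : ℕ ↦ F n - (n * k : ℤ)) n = Δ_[1] F n - k := by
    simp only [fwdDiff]
    push_cast
    ring
  have hperiod (n : ℕ) : 𝐞 (F n - (n * k : ℤ)) = 𝐞 (F n) := by
    rw [AddChar.map_sub_eq_div, fourierChar_intCast, div_one]
  simp_rw [← hperiod]
  refine norm_sum_fourierChar_le_of_fwdDiff_mem_Icc_zero hθ (fun m hm n hn hmn ↦ ?_) fun n hn ↦ ?_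
  · rw [hshift, hshift]
    exact sub_le_sub_right (hmono hm hn hmn) _
  · rw [hshift, Set.mem_Icc]
    constructor <;> linarith [(hF n hn).1, (hF n hn).2]

end KusminLandau

/-! ### The second difference test of van der Corput -/

section SecondDifferenceTest

lemma exists_split_Ico_of_monotoneOn {g : ℕ → ℝ} {a b : ℕ} (hg : MonotoneOn g (Set.Ico a b))
    (hab : a ≤ b) (t : ℝ) :
    ∃ c, a ≤ c ∧ c ≤ b ∧ (∀ n ∈ Set.Ico a c, g n < t) ∧ ∀ n ∈ Set.Ico c b, t ≤ g n := by
  classical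
  have hex : ∃ n, a ≤ n ∧ (n < b → t ≤ g n) := ⟨b, hab, fun h ↦ absurd h (lt_irrefl b)⟩
  have hcb : Nat.find hex ≤ b := Nat.find_min' hex ⟨hab, fun h ↦ absurd h (lt_irrefl b)⟩
  obtain ⟨hac, hc⟩ := Nat.find_spec hex
  refine ⟨Nat.find hex, hac, hcb, fun n hn ↦ ?_, fun n hn ↦ ?_⟩
  · have hmin := Nat.find_min hex hn.2
    push Not at hmin
    exact (hmin hn.1).2
  · have hlt : Nat.find hex < b := hn.1.trans_lt hn.2
    exact (hc hlt).trans (hg ⟨hac, hlt⟩ ⟨hac.trans hn.1, hn.2⟩ hn.1)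

lemma mul_sub_le_sub_of_le_fwdDiff {g : ℕ → ℝ} {l : ℝ} {m n : ℕ} (hmn : m ≤ n)
    (hg : ∀ j ∈ Set.Ico m n, l ≤ Δ_[1] g j) : l * (n - m) ≤ g n - g m := by
  rw [← sum_Ico_sub g hmn]
  refine le_of_eq_of_le ?_ (card_nsmul_le_sum _ _ l fun j hj ↦ hg j (mem_Ico.mp hj))
  rw [Nat.card_Ico, nsmul_eq_mul, Nat.cast_sub hmn, mul_comm]

lemma sub_le_mul_sub_of_fwdDiff_le {g : ℕ → ℝ} {u : ℝ} {m n : ℕ} (hmn : m ≤ n)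
    (hg : ∀ j ∈ Set.Ico m n, Δ_[1] g j ≤ u) : g n - g m ≤ u * (n - m) := by
  rw [← sum_Ico_sub g hmn]
  refine (sum_le_card_nsmul _ _ u fun j hj ↦ hg j (mem_Ico.mp hj)).trans_eq ?_
  rw [Nat.card_Ico, nsmul_eq_mul, Nat.cast_sub hmn, mul_comm]

lemma sub_le_div_add_one_of_le_fwdDiff {g : ℕ → ℝ} {l s t : ℝ} {a b : ℕ} (hl : 0 < l)
    (hst : s ≤ t) (hab : a ≤ b) (hg : ∀ n, a ≤ n → n + 1 < b → l ≤ Δ_[1] g n)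
    (hmem : ∀ n ∈ Set.Ico a b, g n ∈ Set.Icc s t) : (b : ℝ) - a ≤ (t - s) / l + 1 := by
  obtain rfl | hlt := hab.eq_or_lt
  · have := div_nonneg (sub_nonneg.mpr hst) hl.le
    linarith
  obtain ⟨m, rfl⟩ : ∃ m, b = m + 1 := ⟨b - 1, by lia⟩
  have ham : a ≤ m := by lia
  have hsep := mul_sub_le_sub_of_le_fwdDiff ham fun j hj ↦ hg j hj.1 (by have := hj.2; lia)
  have hga := (hmem a ⟨le_rfl, by lia⟩).1
  have hgm := (hmem m ⟨ham, by lia⟩).2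
  have hdiv : (m : ℝ) - a ≤ (t - s) / l := by
    rw [le_div_iff₀' hl]
    linarith
  push_cast
  linarith

lemma monotoneOn_Ico_of_fwdDiff_nonneg {g : ℕ → ℝ} {a b : ℕ}
    (hg : ∀ n, a ≤ n → n + 1 < b → 0 ≤ Δ_[1] g n) : MonotoneOn g (Set.Ico a b) := by
  intro m hm n hn hmn
  have h := mul_sub_le_sub_of_le_fwdDiff hmn fun j hj ↦
    hg j (hm.1.trans hj.1) (by have := hj.2; have := hn.2; lia)
  linarith

lemma norm_sum_Ico_fourierChar_le (F : ℕ → ℝ) {a b : ℕ} (hab : a ≤ b) :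
    ‖∑ n ∈ Ico a b, (𝐞 (F n) : ℂ)‖ ≤ (b : ℝ) - a := by
  refine (norm_sum_le_of_le _ fun n _ ↦ (Circle.norm_coe _).le).trans_eq ?_
  rw [sum_const, Nat.card_Ico, nsmul_eq_mul, mul_one, Nat.cast_sub hab]

lemma norm_sum_Ico_le_add {E : Type*} [SeminormedAddCommGroup E] (f : ℕ → E)
    {a b c : ℕ} (hac : a ≤ c) (hcb : c ≤ b) :
    ‖∑ n ∈ Ico a b, f n‖ ≤ ‖∑ n ∈ Ico a c, f n‖ + ‖∑ n ∈ Ico c b, f n‖ := by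
  rw [← sum_Ico_consecutive f hac hcb]
  exact norm_add_le _ _

variable {F : ℕ → ℝ} {a b : ℕ} {l : ℝ}

lemma norm_sum_fourierChar_le_of_fwdDiff_mem_Ico_add_one (k : ℤ) (hl : 0 < l) (hl1 : l ≤ 1)
    (hab : a ≤ b) (hF₂ : ∀ n, a ≤ n → n + 1 < b → l ≤ Δ_[1] (Δ_[1] F) n)
    (hF₁ : ∀ n ∈ Set.Ico a b, Δ_[1] F n ∈ Set.Ico (k : ℝ) (k + 1)) :
    ‖∑ n ∈ Ico a b, (𝐞 (F n) : ℂ)‖ ≤ 5 / √l := by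
  have hpos : 0 < √l := sqrt_pos.mpr hl
  have hshort {m n : ℕ} {s : ℝ} (hmn : m ≤ n) (ham : a ≤ m) (hnb : n ≤ b)
      (hmem : ∀ j ∈ Set.Ico m n, Δ_[1] F j ∈ Set.Icc s (s + √l)) :
      ‖∑ j ∈ Ico m n, (𝐞 (F j) : ℂ)‖ ≤ 2 / √l := by
    have hcard := sub_le_div_add_one_of_le_fwdDiff hl (le_add_of_nonneg_right hpos.le) hmn
      (fun j hj hj' ↦ hF₂ j (by lia) (by lia)) hmem
    have hone : 1 ≤ 1 / √l := by rwa [one_le_div hpos, sqrt_le_one]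
    rw [add_sub_cancel_left, sqrt_div_self'] at hcard
    linarith [norm_sum_Ico_fourierChar_le F hmn, add_div 1 1 (√l)]
  have hmono := monotoneOn_Ico_of_fwdDiff_nonneg fun n ha hb ↦ hl.le.trans (hF₂ n ha hb)
  obtain ⟨c, hac, hcb, hlt_c, hge_c⟩ := exists_split_Ico_of_monotoneOn hmono hab (k + √l)
  have hmono_c := hmono.mono (Set.Ico_subset_Ico_left hac)
  obtain ⟨d, hcd, hdb, hlt_d, hge_d⟩ := exists_split_Ico_of_monotoneOn hmono_c hcb (k + 1 - √l)
  have hleft : ‖∑ n ∈ Ico a c, (𝐞 (F n) : ℂ)‖ ≤ 2 / √l :=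
    hshort hac le_rfl hcb fun n hn ↦ ⟨(hF₁ n ⟨hn.1, hn.2.trans_le hcb⟩).1, (hlt_c n hn).le⟩
  have hmid : ‖∑ n ∈ Ico c d, (𝐞 (F n) : ℂ)‖ ≤ 1 / √l :=
    norm_sum_fourierChar_le_of_fwdDiff_mem_Icc k hpos
      (hmono_c.mono (Set.Ico_subset_Ico_right hdb))
      fun n hn ↦ ⟨hge_c n ⟨hn.1, hn.2.trans_le hdb⟩, (hlt_d n hn).le⟩
  have hright : ‖∑ n ∈ Ico d b, (𝐞 (F n) : ℂ)‖ ≤ 2 / √l :=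
    hshort hdb (hac.trans hcd) le_rfl fun n hn ↦
      ⟨hge_d n hn, by linarith [(hF₁ n ⟨by have := hn.1; lia, hn.2⟩).2]⟩
  calc _ ≤ _ := norm_sum_Ico_le_add _ hac hcb
    _ ≤ _ + (_ + _) := by gcongr; exact norm_sum_Ico_le_add _ hcd hdb
    _ ≤ 2 / √l + (1 / √l + 2 / √l) := by gcongr
    _ = 5 / √l := by ring

lemma norm_sum_fourierChar_le_of_fwdDiff_mem_Ico (k : ℤ) (m : ℕ) (hl : 0 < l) (hl1 : l ≤ 1)
    (hab : a ≤ b) (hF₂ : ∀ n, a ≤ n → n + 1 < b → l ≤ Δ_[1] (Δ_[1] F) n)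
    (hF₁ : ∀ n ∈ Set.Ico a b, Δ_[1] F n ∈ Set.Ico (k : ℝ) (k + m)) :
    ‖∑ n ∈ Ico a b, (𝐞 (F n) : ℂ)‖ ≤ m * (5 / √l) := by
  induction m generalizing b with
  | zero =>
    have hempty : Ico a b = ∅ := by
      refine eq_empty_of_forall_notMem fun n hn ↦ ?_
      have := hF₁ n (mem_Ico.mp hn)
      simp at this
    simp [hempty]
  | succ m ih =>
    have hmono := monotoneOn_Ico_of_fwdDiff_nonneg fun n ha hb ↦ hl.le.trans (hF₂ n ha hb)
    obtain ⟨c, hac, hcb, hlt, hge⟩ := exists_split_Ico_of_monotoneOn hmono hab (k + m)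
    have hinit : ‖∑ n ∈ Ico a c, (𝐞 (F n) : ℂ)‖ ≤ m * (5 / √l) :=
      ih hac (fun n ha hc ↦ hF₂ n ha (by lia)) fun n hn ↦
        ⟨(hF₁ n ⟨hn.1, hn.2.trans_le hcb⟩).1, hlt n hn⟩
    have hlast : ‖∑ n ∈ Ico c b, (𝐞 (F n) : ℂ)‖ ≤ 5 / √l := by
      refine norm_sum_fourierChar_le_of_fwdDiff_mem_Ico_add_one (k + m) hl hl1 hcb
        (fun n hc hb ↦ hF₂ n (by lia) hb) fun n hn ↦ ?_
      have := (hF₁ n ⟨hac.trans hn.1, hn.2⟩).2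
      push_cast at this ⊢
      exact ⟨hge n hn, by linarith⟩
    refine (norm_sum_Ico_le_add _ hac hcb).trans ?_
    push_cast
    linarith

theorem norm_sum_fourierChar_le_of_fwdDiff_fwdDiff_mem_Icc {u : ℝ} (hl : 0 < l) (hlu : l ≤ u)
    (hab : a ≤ b) (hF : ∀ n, a ≤ n → n + 1 < b → Δ_[1] (Δ_[1] F) n ∈ Set.Icc l u) :
    ‖∑ n ∈ Ico a b, (𝐞 (F n) : ℂ)‖ ≤ 5 * (u * (b - a) + 2) / √l := by
  have hlen : (0 : ℝ) ≤ b - a := sub_nonneg.mpr (by exact_mod_cast hab)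
  obtain h1 | h1 := le_or_gt 1 l
  · have hsqrt : √l ≤ l := sqrt_le_iff.mpr ⟨hl.le, le_self_pow₀ h1 two_ne_zero⟩
    refine (norm_sum_Ico_fourierChar_le F hab).trans ((le_div_iff₀ (sqrt_pos.mpr hl)).mpr ?_)
    nlinarith [mul_le_mul_of_nonneg_left (hsqrt.trans hlu) hlen]
  have hrange : ∀ n ∈ Set.Ico a b,
      Δ_[1] F n ∈ Set.Ico (⌊Δ_[1] F a⌋ : ℝ) (⌊Δ_[1] F a⌋ + (⌈u * (b - a)⌉₊ + 1 : ℕ)) := by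
    intro n hn
    have hlower := mul_sub_le_sub_of_le_fwdDiff hn.1 fun j hj ↦
      (hF j hj.1 (by have := hj.2; have := hn.2; lia)).1
    have hupper := sub_le_mul_sub_of_fwdDiff_le hn.1 fun j hj ↦
      (hF j hj.1 (by have := hj.2; have := hn.2; lia)).2
    have hna : (a : ℝ) ≤ n := by exact_mod_cast hn.1
    have hnb : (n : ℝ) ≤ b := by exact_mod_cast hn.2.le
    have hu : u * (n - a) ≤ u * (b - a) := by
      have := hl.le.trans hlu
      gcongr
    push_cast
    constructor
    · nlinarith [Int.floor_le (Δ_[1] F a)]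
    · linarith [Int.lt_floor_add_one (Δ_[1] F a), Nat.le_ceil (u * ((b : ℝ) - a))]
  calc _ ≤ _ := norm_sum_fourierChar_le_of_fwdDiff_mem_Ico _ _ hl h1.le hab
        (fun n ha hb ↦ (hF n ha hb).1) hrange
    _ ≤ (u * (b - a) + 2) * (5 / √l) := by
      gcongr
      push_cast
      linarith [Nat.ceil_lt_add_one (mul_nonneg (hl.le.trans hlu) hlen)]
    _ = 5 * (u * (b - a) + 2) / √l := by ring

end SecondDifferenceTest

/-! ### Sums of the sawtooth function -/

section Sawtooth

lemma sum_range_one_div_sqrt_le (N : ℕ) :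
    ∑ n ∈ range N, 1 / √((n : ℝ) + 1) ≤ 2 * √N := by
  induction N with
  | zero => simp
  | succ N ih =>
    have hstep : 1 / √((N : ℝ) + 1) ≤ 2 * √((N : ℝ) + 1) - 2 * √(N : ℝ) := by
      rw [div_le_iff₀ (by positivity)]
      nlinarith [sq_nonneg (√((N : ℝ) + 1) - √N), mul_self_sqrt (Nat.cast_nonneg (α := ℝ) N),
        mul_self_sqrt (by positivity : (0 : ℝ) ≤ N + 1)]
    rw [sum_range_succ]
    push_cast
    linarith

lemma one_div_mul_sqrt_add_one_le {x : ℝ} (hx : 0 < x) :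
    1 / ((x + 1) * √(x + 1)) ≤ 2 / √x - 2 / √(x + 1) := by
  have hp : 0 < √x := sqrt_pos.mpr hx
  have hpq : √x ≤ √(x + 1) := sqrt_le_sqrt (by linarith)
  have hsq : √(x + 1) * √(x + 1) = x + 1 := mul_self_sqrt (by linarith)
  have hdiff : (√(x + 1) - √x) * (√(x + 1) + √x) = 1 := by
    linear_combination hsq - mul_self_sqrt hx.le
  generalize √(x + 1) = q at *
  generalize √x = p at *
  have hq : 0 < q := hp.trans_le hpq
  have hone : 1 ≤ (q - p) * (2 * q) := by nlinarith
  rw [← hsq, div_sub_div _ _ hp.ne' hq.ne', div_le_div_iff₀ (by positivity) (by positivity)]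
  nlinarith [mul_le_mul_of_nonneg_right hone (by positivity : 0 ≤ q * q),
    mul_le_mul_of_nonneg_right hpq hq.le]

lemma sum_Ico_one_div_mul_sqrt_le {a b : ℕ} (ha : 0 < a) (hab : a ≤ b) :
    ∑ n ∈ Ico a b, 1 / (((n : ℝ) + 1) * √((n : ℝ) + 1)) ≤ 2 / √a := by
  have hle : ∀ n ∈ Ico a b, 1 / (((n : ℝ) + 1) * √((n : ℝ) + 1)) ≤
      -(2 / √((n + 1 : ℕ) : ℝ)) - -(2 / √(n : ℝ)) := by
    intro n hn
    have hn0 : (0 : ℝ) < n := by exact_mod_cast ha.trans_le (mem_Ico.mp hn).1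
    rw [Nat.cast_succ]
    linarith [one_div_mul_sqrt_add_one_le hn0]
  refine (sum_le_sum hle).trans ?_
  rw [sum_Ico_sub (fun n : ℕ ↦ -(2 / √(n : ℝ))) hab]
  have : 0 ≤ 2 / √(b : ℝ) := by positivity
  linarith

lemma abs_le_of_hasSum_of_abs_le {u : ℕ → ℝ} {A S : ℝ} {H : ℕ} (hu : HasSum u S) (hA : 0 ≤ A)
    (hH : 0 < H) (hsmall : ∀ n, |u n| ≤ A / H * (1 / √((n : ℝ) + 1)))
    (hlarge : ∀ n, |u n| ≤ A * (1 / (((n : ℝ) + 1) * √((n : ℝ) + 1)))) :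
    |S| ≤ 4 * A / √H := by
  refine le_of_tendsto hu.tendsto_sum_nat.abs ?_
  filter_upwards [Filter.eventually_ge_atTop H] with N hN
  have hhead : ∑ n ∈ range H, |u n| ≤ A / H * (2 * √H) := by
    refine (sum_le_sum fun n _ ↦ hsmall n).trans ?_
    rw [← mul_sum]
    gcongr
    exact sum_range_one_div_sqrt_le H
  have htail : ∑ n ∈ Ico H N, |u n| ≤ A * (2 / √H) := by
    refine (sum_le_sum fun n _ ↦ hlarge n).trans ?_
    rw [← mul_sum]
    gcongr
    exact sum_Ico_one_div_mul_sqrt_le hH hN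
  calc |∑ n ∈ range N, u n| ≤ ∑ n ∈ range N, |u n| := abs_sum_le_sum_abs _ _
    _ ≤ A / H * (2 * √H) + A * (2 / √H) := by
      rw [← sum_range_add_sum_Ico _ hN]
      exact add_le_add hhead htail
    _ = 2 * A * (√H / H) + A * (2 / √H) := by ring
    _ = 4 * A / √H := by
      rw [sqrt_div_self']
      ring

lemma hasSum_fourierChar_re_bernoulliFun_two (t : ℝ) :
    HasSum (fun n : ℕ ↦ 1 / ((n : ℝ) + 1) ^ 2 * (𝐞 ((n + 1) * t) : ℂ).re)
      (π ^ 2 * bernoulliFun 2 (Int.fract t)) := by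
  have h := hasSum_one_div_nat_pow_mul_cos (k := 1) one_ne_zero (x := Int.fract t)
    ⟨Int.fract_nonneg t, (Int.fract_lt_one t).le⟩
  have hcos (n : ℕ) : cos (2 * π * n * Int.fract t) = (𝐞 (n * t) : ℂ).re := by
    rw [fourierChar_apply, Complex.exp_ofReal_mul_I_re, ← cos_add_int_mul_two_pi _ (n * ⌊t⌋),
      ← Int.self_sub_floor]
    congr 1
    push_cast
    ring
  rw [← hasSum_nat_add_iff' 1] at h
  simp only [hcos] at h
  convert! h using 1
  · ext n
    push_cast
    ring_nf
  · have hcoeff : (2 * π) ^ 2 / 2 / 2 = π ^ 2 := by ring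
    simp [hcoeff, bernoulliFun]

lemma bernoulliFun_two_fract_le (u : ℝ) : bernoulliFun 2 (Int.fract u) ≤ bernoulliFun 2 u := by
  have hfract := Int.fract_nonneg u
  have hfract' := Int.fract_lt_one u
  have hu := Int.floor_add_fract u
  have hsign : 0 ≤ (⌊u⌋ : ℝ) * (⌊u⌋ - 1 + 2 * Int.fract u) := by
    obtain h | h := le_or_gt 1 ⌊u⌋
    · have : (1 : ℝ) ≤ ⌊u⌋ := by exact_mod_cast h
      apply mul_nonneg <;> linarith
    · obtain h | h := (Int.le_sub_one_of_lt h).eq_or_lt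
      · simp [h]
      · have : (⌊u⌋ : ℝ) ≤ -1 := by exact_mod_cast Int.le_sub_one_of_lt h
        exact mul_nonneg_of_nonpos_of_nonpos (by linarith) (by linarith)
  rw [bernoulliFun_two, bernoulliFun_two]
  nlinarith

lemma bernoulliFun_two_fract_add_le (t δ : ℝ) :
    bernoulliFun 2 (Int.fract (t + δ)) ≤
      bernoulliFun 2 (Int.fract t) + 2 * δ * (Int.fract t - 1 / 2) + δ ^ 2 := by
  have hfract : Int.fract (t + δ) = Int.fract (Int.fract t + δ) := by
    rw [← Int.fract_add_intCast (Int.fract t + δ) ⌊t⌋]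
    congr 1
    linarith [Int.fract_add_floor t]
  rw [hfract]
  refine (bernoulliFun_two_fract_le _).trans_eq ?_
  rw [bernoulliFun_two, bernoulliFun_two]
  ring

variable {ι : Type*} {s : Finset ι} {f : ι → ℝ} {W : ℝ} {H : ℕ}

lemma abs_sum_fourierChar_re_shift_le {ε : ℝ} (h : ℝ) :
    |∑ i ∈ s, ((𝐞 (h * (f i + ε)) : ℂ).re - (𝐞 (h * f i) : ℂ).re)| ≤
      ‖∑ i ∈ s, (𝐞 (h * f i) : ℂ)‖ * ‖(𝐞 (h * ε) : ℂ) - 1‖ := by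
  have hfactor : ∑ i ∈ s, ((𝐞 (h * (f i + ε)) : ℂ).re - (𝐞 (h * f i) : ℂ).re) =
      ((∑ i ∈ s, (𝐞 (h * f i) : ℂ)) * ((𝐞 (h * ε) : ℂ) - 1)).re := by
    rw [sum_mul, Complex.re_sum]
    refine sum_congr rfl fun i _ ↦ ?_
    rw [mul_add, AddChar.map_add_eq_mul, Circle.coe_mul, mul_sub_one, Complex.sub_re]
  rw [hfactor, ← norm_mul]
  exact Complex.abs_re_le_norm _

lemma abs_sum_bernoulliFun_two_shift_le {ε : ℝ} (hH : 0 < H) (hε : |ε| = 1 / H)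
    (hW : ∀ h : ℕ, ‖∑ i ∈ s, (𝐞 ((h + 1) * f i) : ℂ)‖ ≤ W * √(h + 1)) :
    |∑ i ∈ s, (bernoulliFun 2 (Int.fract (f i + ε)) - bernoulliFun 2 (Int.fract (f i)))| ≤
      8 * W / √H := by
  have hW0 : 0 ≤ W := by simpa using (norm_nonneg _).trans (hW 0)
  have hsum := hasSum_sum (s := s) fun i _ ↦
    (hasSum_fourierChar_re_bernoulliFun_two (f i + ε)).sub
      (hasSum_fourierChar_re_bernoulliFun_two (f i))
  simp only [← mul_sub, ← mul_sum] at hsum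
  have hterm (h : ℕ) {B : ℝ} (hB : ‖(𝐞 ((h + 1) * ε) : ℂ) - 1‖ ≤ B) :
      |1 / ((h : ℝ) + 1) ^ 2 *
        ∑ i ∈ s, ((𝐞 ((h + 1) * (f i + ε)) : ℂ).re - (𝐞 ((h + 1) * f i) : ℂ).re)| ≤
      W * B * (1 / ((h + 1) * √(h + 1))) := by
    rw [abs_mul, abs_of_nonneg (by positivity)]
    calc _ ≤ 1 / ((h : ℝ) + 1) ^ 2 * (W * √(h + 1) * B) := by
          gcongr
          refine (abs_sum_fourierChar_re_shift_le _).trans ?_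
          gcongr
          exact hW h
      _ = W * B * (1 / (h + 1) * (√(h + 1) / (h + 1))) := by field_simp
      _ = W * B * (1 / ((h + 1) * √(h + 1))) := by rw [sqrt_div_self', one_div_mul_one_div]
  have hbound := abs_le_of_hasSum_of_abs_le hsum (A := 2 * π * W) (by positivity) hH
    (fun h ↦ ?_) fun h ↦ ?_
  · rw [abs_mul, abs_of_nonneg (by positivity), sq, mul_assoc,
      show 4 * (2 * π * W) / √H = π * (8 * W / √H) by ring] at hbound
    have hpi := le_of_mul_le_mul_left hbound pi_pos
    exact (le_mul_of_one_le_left (abs_nonneg _) (by linarith [pi_gt_three])).trans hpi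
  · refine (hterm h (norm_fourierChar_sub_one_le _)).trans_eq ?_
    rw [abs_mul, hε, abs_of_nonneg (by positivity)]
    field_simp
  · refine (hterm h ((norm_sub_le _ _).trans (?_ : _ ≤ 2 * π))).trans_eq (by ring)
    rw [Circle.norm_coe, norm_one]
    linarith [pi_gt_three]

theorem abs_sum_fract_sub_half_le (hH : 0 < H)
    (hW : ∀ h : ℕ, ‖∑ i ∈ s, (𝐞 ((h + 1) * f i) : ℂ)‖ ≤ W * √(h + 1)) :
    |∑ i ∈ s, (Int.fract (f i) - 1 / 2)| ≤ 4 * W * √H + #s / (2 * H) := by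
  have : (0 : ℝ) < H := by exact_mod_cast hH
  have hquad {ε : ℝ} (hε : |ε| = 1 / H) :
      -(8 * W / √H) ≤ 2 * ε * ∑ i ∈ s, (Int.fract (f i) - 1 / 2) + #s * ε ^ 2 := by
    refine (neg_le_of_abs_le (abs_sum_bernoulliFun_two_shift_le hH hε hW)).trans ?_
    rw [mul_sum, ← nsmul_eq_mul, ← sum_const, ← sum_add_distrib]
    exact sum_le_sum fun i _ ↦ by linarith [bernoulliFun_two_fract_add_le (f i) ε]
  have hpos := hquad (ε := 1 / H) (abs_of_pos (by positivity))
  have hneg := hquad (ε := -(1 / H)) (by rw [abs_neg]; exact abs_of_pos (by positivity))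
  rw [← mul_le_mul_iff_right₀ (by positivity : (0 : ℝ) < 2 * (1 / H))]
  have hrhs : 2 * (1 / (H : ℝ)) * (4 * W * √H + #s / (2 * H)) =
      8 * W / √H + #s * (1 / H : ℝ) ^ 2 := by
    rw [mul_add, show 2 * (1 / (H : ℝ)) * (4 * W * √H) = 8 * W * (√H / H) by ring,
      sqrt_div_self']
    field_simp
  rw [hrhs, ← abs_of_pos (by positivity : (0 : ℝ) < 2 * (1 / H)), ← abs_mul, abs_le]
  constructor <;> linarith

end Sawtooth

/-! ### Sums over a circular arc -/

section CircleArc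

lemma exists_fwdDiff_fwdDiff_eq {f f' f'' : ℝ → ℝ} {t : ℝ}
    (hf : ∀ x ∈ Set.Icc t (t + 2), HasDerivAt f (f' x) x)
    (hf' : ∀ x ∈ Set.Icc t (t + 2), HasDerivAt f' (f'' x) x) :
    ∃ η ∈ Set.Ioo t (t + 2), Δ_[1] (Δ_[1] f) t = f'' η := by
  have hdiff : ∀ x ∈ Set.Icc t (t + 1), HasDerivAt (Δ_[1] f) (f' (x + 1) - f' x) x :=
    fun x hx ↦ ((hf (x + 1) ⟨by linarith [hx.1], by linarith [hx.2]⟩).comp_add_const x 1).sub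
      (hf x ⟨hx.1, by linarith [hx.2]⟩)
  obtain ⟨ξ, hξ, hslope⟩ := exists_hasDerivAt_eq_slope (Δ_[1] f) _ (lt_add_one t)
    (fun x hx ↦ (hdiff x hx).continuousAt.continuousWithinAt)
    fun x hx ↦ hdiff x (Set.Ioo_subset_Icc_self hx)
  have hmem : ∀ x ∈ Set.Icc ξ (ξ + 1), x ∈ Set.Icc t (t + 2) :=
    fun x hx ↦ ⟨by linarith [hx.1, hξ.1], by linarith [hx.2, hξ.2]⟩
  obtain ⟨η, hη, hslope'⟩ := exists_hasDerivAt_eq_slope f' f'' (lt_add_one ξ)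
    (fun x hx ↦ (hf' x (hmem x hx)).continuousAt.continuousWithinAt)
    fun x hx ↦ hf' x (hmem x (Set.Ioo_subset_Icc_self hx))
  refine ⟨η, ⟨hξ.1.trans hη.1, by linarith [hη.2, hξ.2]⟩, ?_⟩
  rw [add_sub_cancel_left, div_one] at hslope hslope'
  rw [hslope', hslope, fwdDiff]

lemma abs_trapezoidal_error_le_of_hasDerivAt {f f' f'' : ℝ → ℝ} {a b ζ : ℝ} {N : ℕ} (hN : 0 < N)
    (hab : a ≤ b) (hf : ∀ x ∈ Set.Icc a b, HasDerivAt f (f' x) x)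
    (hf' : ∀ x ∈ Set.Icc a b, HasDerivAt f' (f'' x) x) (hζ : ∀ x ∈ Set.Icc a b, |f'' x| ≤ ζ) :
    |trapezoidal_error f N a b| ≤ (b - a) ^ 3 * ζ / (12 * N ^ 2) := by
  obtain rfl | hlt := hab.eq_or_lt
  · simp
  have huniq := uniqueDiffOn_Icc hlt
  have hderiv {x : ℝ} (hx : x ∈ Set.Icc a b) : derivWithin f (Set.Icc a b) x = f' x :=
    (hf x hx).hasDerivWithinAt.derivWithin (huniq x hx)
  have hderiv₂ {x : ℝ} (hx : x ∈ Set.Icc a b) :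
      HasDerivWithinAt (derivWithin f (Set.Icc a b)) (f'' x) (Set.Icc a b) x :=
    (hf' x hx).hasDerivWithinAt.congr (fun y hy ↦ hderiv hy) (hderiv hx)
  have hbound (x : ℝ) : |iteratedDerivWithin 2 f (Set.Icc a b) x| ≤ ζ := by
    rw [iteratedDerivWithin_succ, iteratedDerivWithin_one]
    by_cases hx : x ∈ Set.Icc a b
    · rw [(hderiv₂ hx).derivWithin (huniq x hx)]
      exact hζ x hx
    · rw [derivWithin_zero_of_notMem_closure (by rwa [closure_Icc]), abs_zero]
      exact (abs_nonneg _).trans (hζ a ⟨le_rfl, hab⟩)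
  rw [← Set.uIcc_of_le hab] at hderiv₂ hbound hf
  have h := trapezoidal_error_le (fun x hx ↦ (hf x hx).differentiableAt.differentiableWithinAt)
    (fun x hx ↦ (hderiv₂ hx).differentiableWithinAt) hbound hN
  rwa [abs_of_nonneg (sub_nonneg.mpr hab)] at h

/-- The height at abscissa `t` of the upper half of the circle of radius `r` about the origin; it
is `0` when `r < |t|`, by the convention for square roots of negative numbers. -/
noncomputable def circleArc (r t : ℝ) : ℝ := √(r ^ 2 - t ^ 2)

variable {r t : ℝ}

lemma continuous_circleArc (r : ℝ) : Continuous (circleArc r) := by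
  unfold circleArc
  fun_prop

lemma circleArc_sq (ht : t ^ 2 ≤ r ^ 2) : circleArc r t ^ 2 = r ^ 2 - t ^ 2 :=
  sq_sqrt (sub_nonneg.mpr ht)

lemma circleArc_pos (ht : t ^ 2 < r ^ 2) : 0 < circleArc r t :=
  sqrt_pos.mpr (sub_pos.mpr ht)

lemma circleArc_nonneg (r t : ℝ) : 0 ≤ circleArc r t := sqrt_nonneg _

lemma hasDerivAt_circleArc (ht : t ^ 2 < r ^ 2) :
    HasDerivAt (circleArc r) (-t / circleArc r t) t := by
  have h := ((hasDerivAt_pow 2 t).const_sub (r ^ 2)).sqrt (sub_pos.mpr ht).ne'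
  convert! h using 1
  rw [circleArc]
  push_cast
  ring

lemma hasDerivAt_neg_div_circleArc (ht : t ^ 2 < r ^ 2) :
    HasDerivAt (fun t ↦ -t / circleArc r t) (-r ^ 2 / circleArc r t ^ 3) t := by
  have hpos := circleArc_pos ht
  convert! (hasDerivAt_id t).neg.div (hasDerivAt_circleArc ht) hpos.ne' using 1
  have hsq := circleArc_sq ht.le
  simp only [id, Pi.neg_apply]
  field_simp
  linear_combination hsq

lemma sq_lt_sq_of_two_mul_sq_le (hr : 0 < r) (ht : 2 * t ^ 2 ≤ r ^ 2) : t ^ 2 < r ^ 2 := by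
  nlinarith [sq_nonneg t, pow_pos hr 2]

lemma sq_div_circleArc_cube_mem_Icc (hr : 0 < r) (ht : 2 * t ^ 2 ≤ r ^ 2) :
    r ^ 2 / circleArc r t ^ 3 ∈ Set.Icc (1 / r) (3 / r) := by
  have ht' := sq_lt_sq_of_two_mul_sq_le hr ht
  have hpos := circleArc_pos ht'
  have hsq := circleArc_sq ht'.le
  have hle : circleArc r t ≤ r := by nlinarith [sq_nonneg t]
  have hge : 2 * r ≤ 3 * circleArc r t := by nlinarith
  generalize circleArc r t = y at *
  constructor
  · rw [div_le_div_iff₀ hr (by positivity)]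
    calc 1 * y ^ 3 ≤ 1 * r ^ 3 := by gcongr
      _ = r ^ 2 * r := by ring
  · rw [div_le_div_iff₀ (by positivity) hr]
    calc r ^ 2 * r ≤ 2 * y ^ 2 * r := by gcongr; linarith
      _ = y ^ 2 * (2 * r) := by ring
      _ ≤ y ^ 2 * (3 * y) := by gcongr
      _ = 3 * y ^ 3 := by ring

variable {M : ℕ}

lemma norm_sum_fourierChar_neg {ι : Type*} (s : Finset ι) (f : ι → ℝ) :
    ‖∑ i ∈ s, (𝐞 (-f i) : ℂ)‖ = ‖∑ i ∈ s, (𝐞 (f i) : ℂ)‖ := by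
  simp only [AddChar.map_neg_eq_inv, Circle.coe_inv_eq_conj]
  rw [← map_sum, RCLike.norm_conj]

lemma fwdDiff_fwdDiff_neg_mul_circleArc_mem_Icc (hr : 0 < r) (hM : 2 * (M : ℝ) ^ 2 ≤ r ^ 2)
    {h : ℝ} (hh : 0 ≤ h) {n : ℕ} (hn : n + 2 ≤ M) :
    Δ_[1] (Δ_[1] fun m : ℕ ↦ -(h * circleArc r m)) n ∈ Set.Icc (h / r) (3 * h / r) := by
  have hnM : (n : ℝ) + 2 ≤ M := by exact_mod_cast hn
  have hmem {x : ℝ} (hx : x ∈ Set.Icc (n : ℝ) (n + 2)) : 2 * x ^ 2 ≤ r ^ 2 := by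
    have : x ^ 2 ≤ (M : ℝ) ^ 2 := pow_le_pow_left₀ (n.cast_nonneg.trans hx.1) (hx.2.trans hnM) 2
    linarith
  have hlt {x : ℝ} (hx : x ∈ Set.Icc (n : ℝ) (n + 2)) : x ^ 2 < r ^ 2 :=
    sq_lt_sq_of_two_mul_sq_le hr (hmem hx)
  obtain ⟨η, hη, hη_eq⟩ := exists_fwdDiff_fwdDiff_eq (fun x hx ↦ hasDerivAt_circleArc (hlt hx))
    fun x hx ↦ hasDerivAt_neg_div_circleArc (hlt hx)
  have hcast : Δ_[1] (Δ_[1] fun m : ℕ ↦ -(h * circleArc r m)) n =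
      h * -(Δ_[1] (Δ_[1] (circleArc r)) n) := by
    simp only [fwdDiff]
    push_cast
    ring
  rw [hcast, hη_eq, neg_div, neg_neg, mul_comm 3 h, mul_div_assoc, ← mul_one_div h r]
  obtain ⟨hlower, hupper⟩ :=
    sq_div_circleArc_cube_mem_Icc hr (hmem (Set.Ioo_subset_Icc_self hη))
  exact ⟨by gcongr, by gcongr⟩

lemma norm_sum_fourierChar_mul_circleArc_le (hr : 1 ≤ r) (hM : 2 * (M : ℝ) ^ 2 ≤ r ^ 2) {h : ℝ}
    (hh : 1 ≤ h) :
    ‖∑ n ∈ Ico 1 (M + 1), (𝐞 (h * circleArc r n) : ℂ)‖ ≤ 26 * √r * √h := by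
  have hr0 : 0 < r := by linarith
  have hh0 : 0 < h := by linarith
  have hone : 1 ≤ √r * √h := by
    rw [← sqrt_mul hr0.le]
    exact one_le_sqrt.mpr (by nlinarith)
  obtain rfl | hMpos := Nat.eq_zero_or_pos M
  · simp only [zero_add, Ico_self, sum_empty, norm_zero]
    positivity
  have hMr : (M : ℝ) ≤ r := by nlinarith [sq_nonneg (M : ℝ)]
  have htest : ‖∑ n ∈ Ico 1 M, (𝐞 (h * circleArc r n) : ℂ)‖ ≤ 25 * √r * √h := by
    rw [← norm_sum_fourierChar_neg]
    refine (norm_sum_fourierChar_le_of_fwdDiff_fwdDiff_mem_Icc (l := h / r) (u := 3 * h / r)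
      (by positivity) (by gcongr; linarith) hMpos fun n _ hn ↦
        fwdDiff_fwdDiff_neg_mul_circleArc_mem_Icc hr0 hM hh0.le hn).trans ?_
    have hlen : 3 * h / r * (M - (1 : ℕ)) ≤ 3 * h := by
      rw [div_mul_eq_mul_div, div_le_iff₀ hr0]
      gcongr
      push_cast
      linarith
    rw [sqrt_div hh0.le, div_div_eq_mul_div, div_le_iff₀ (sqrt_pos.mpr hh0)]
    calc 5 * (3 * h / r * (M - (1 : ℕ)) + 2) * √r ≤ 5 * (3 * h + 2 * h) * √r := by
          gcongr
          linarith
      _ = 25 * √r * (√h * √h) := by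
          rw [mul_self_sqrt hh0.le]
          ring
      _ = 25 * √r * √h * √h := by ring
  rw [sum_Ico_succ_top hMpos]
  refine (norm_add_le _ _).trans ?_
  rw [Circle.norm_coe]
  linarith

theorem abs_sum_fract_circleArc_sub_half_le (hr : 1 ≤ r) (hM : 2 * (M : ℝ) ^ 2 ≤ r ^ 2) :
    |∑ n ∈ Ico 1 (M + 1), (Int.fract (circleArc r n) - 1 / 2)| ≤ 157 * r ^ (2 / 3 : ℝ) := by
  obtain ⟨z, hz⟩ : ∃ z, z = r ^ (1 / 3 : ℝ) := ⟨_, rfl⟩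
  have hr0 : 0 ≤ r := by linarith
  have hz1 : 1 ≤ z := hz ▸ one_le_rpow hr (by norm_num)
  have hz2 : r ^ (2 / 3 : ℝ) = z ^ 2 := by
    rw [hz, ← rpow_natCast, ← rpow_mul hr0]
    norm_num
  have hz3 : r = z ^ 3 := by
    rw [hz, ← rpow_natCast, ← rpow_mul hr0]
    norm_num
  have hMr : (M : ℝ) ≤ r := by nlinarith [sq_nonneg (M : ℝ)]
  have hHpos : 0 < ⌈z⌉₊ := Nat.ceil_pos.mpr (by linarith)
  have hsaw := abs_sum_fract_sub_half_le (s := Ico 1 (M + 1)) (f := fun n : ℕ ↦ circleArc r n)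
    (W := 26 * √r) hHpos fun h ↦ norm_sum_fourierChar_mul_circleArc_le hr hM (by simp)
  rw [Nat.card_Ico, add_tsub_cancel_right] at hsaw
  have hHz : √⌈z⌉₊ ≤ 3 / 2 * √z := by
    rw [sqrt_le_left (by positivity), mul_pow, sq_sqrt (by linarith)]
    linarith [Nat.ceil_lt_add_one (by linarith : 0 ≤ z)]
  have hrz : √r * √z = z ^ 2 := by
    rw [hz3, ← sqrt_mul (by positivity), ← pow_succ, show z ^ (3 + 1) = (z ^ 2) ^ 2 by ring,
      sqrt_sq (by positivity)]
  have hlen : (M : ℝ) / (2 * ⌈z⌉₊) ≤ z ^ 2 := by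
    rw [div_le_iff₀ (by positivity)]
    have : z ^ 2 * z ≤ z ^ 2 * ⌈z⌉₊ := by gcongr; exact Nat.le_ceil z
    nlinarith
  calc _ ≤ 4 * (26 * √r) * √⌈z⌉₊ + M / (2 * ⌈z⌉₊) := hsaw
    _ ≤ 4 * (26 * √r) * (3 / 2 * √z) + z ^ 2 := by gcongr
    _ = 157 * r ^ (2 / 3 : ℝ) := by linear_combination 156 * hrz - 157 * hz2

lemma integral_circleArc {φ : ℝ} (hr : 0 ≤ r) (hφ : φ ∈ Set.Icc 0 (π / 2)) :
    ∫ t in 0..r * sin φ, circleArc r t = r ^ 2 / 2 * (φ + sin φ * cos φ) := by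
  have hsubst : ∫ θ in 0..φ, circleArc r (r * sin θ) * (r * cos θ) =
      ∫ t in 0..r * sin φ, circleArc r t := by
    have h := intervalIntegral.integral_comp_mul_deriv (a := 0) (b := φ)
      (fun θ _ ↦ (hasDerivAt_sin θ).const_mul r) (by fun_prop) (continuous_circleArc r)
    rwa [sin_zero, mul_zero] at h
  have hcos : ∀ θ ∈ Set.uIcc 0 φ, circleArc r (r * sin θ) * (r * cos θ) = r ^ 2 * cos θ ^ 2 := by
    intro θ hθ
    rw [Set.uIcc_of_le hφ.1] at hθ
    have hcos0 : 0 ≤ cos θ :=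
      cos_nonneg_of_neg_pi_div_two_le_of_le (by linarith [hθ.1, pi_pos]) (hθ.2.trans hφ.2)
    rw [circleArc, show r ^ 2 - (r * sin θ) ^ 2 = (r * cos θ) ^ 2 by
      linear_combination -r ^ 2 * sin_sq_add_cos_sq θ, sqrt_sq (by positivity)]
    ring
  rw [← hsubst, intervalIntegral.integral_congr hcos, intervalIntegral.integral_const_mul,
    integral_cos_sq, sin_zero, cos_zero]
  ring

variable {c : ℝ}

lemma integral_circleArc_of_two_mul_sq_eq (hr : 0 ≤ r) (hc : 0 ≤ c) (hrc : 2 * c ^ 2 = r ^ 2) :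
    ∫ t in 0..c, circleArc r t = π * r ^ 2 / 8 + r ^ 2 / 4 := by
  have hc_eq : c = r * sin (π / 4) := by
    rw [sin_pi_div_four, ← sq_eq_sq₀ hc (by positivity), mul_pow, div_pow, sq_sqrt zero_le_two]
    linarith
  rw [hc_eq, integral_circleArc hr ⟨by positivity, by linarith [pi_pos]⟩, sin_pi_div_four,
    cos_pi_div_four, div_mul_div_comm, mul_self_sqrt zero_le_two]
  ring

lemma abs_circleArc_sub_le (ht : 0 ≤ t) (htc : t ≤ c) (hrc : 2 * c ^ 2 = r ^ 2) :
    |circleArc r t - c| ≤ c - t := by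
  have hlower : c ≤ circleArc r t := le_sqrt_of_sq_le (by nlinarith)
  have hupper : circleArc r t ≤ 2 * c - t :=
    sqrt_le_iff.mpr ⟨by linarith, by nlinarith [sq_nonneg (c - t)]⟩
  rw [abs_of_nonneg (sub_nonneg.mpr hlower)]
  linarith

lemma abs_integral_circleArc_sub_le (ht : 0 ≤ t) (htc : t ≤ c) (hct : c ≤ t + 1)
    (hrc : 2 * c ^ 2 = r ^ 2) : |(∫ u in t..c, circleArc r u) - (c - t) * c| ≤ 1 := by
  have hbound : ∀ u ∈ Set.uIoc t c, ‖circleArc r u - c‖ ≤ 1 := by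
    intro u hu
    rw [Set.uIoc_of_le htc] at hu
    exact (abs_circleArc_sub_le (ht.trans hu.1.le) hu.2 hrc).trans (by linarith [hu.1])
  have h := intervalIntegral.norm_integral_le_of_norm_le_const hbound
  rw [intervalIntegral.integral_sub ((continuous_circleArc r).intervalIntegrable t c)
    intervalIntegrable_const, intervalIntegral.integral_const, smul_eq_mul, one_mul,
    abs_of_nonneg (sub_nonneg.mpr htc)] at h
  exact h.trans (by linarith)

lemma trapezoidal_integral_zero_natCast (f : ℝ → ℝ) (N : ℕ) :
    trapezoidal_integral f N 0 N = ∑ n ∈ Ico 1 (N + 1), f n + (f 0 - f N) / 2 := by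
  obtain rfl | hN := Nat.eq_zero_or_pos N
  · simp
  have h := sum_trapezoidal_integral_adjacent_intervals (f := f) (a := 0) (h := 1) hN
  simp only [zero_add, mul_one, trapezoidal_integral_one, add_sub_cancel_left] at h
  rw [← h, ← sum_Ico_add' _ 0 N 1]
  clear h hN
  induction N with
  | zero => simp
  | succ N ih =>
    rw [sum_range_succ, ih, sum_Ico_succ_top N.zero_le]
    push_cast
    ring

lemma abs_trapezoidal_error_circleArc_le (hr : 0 < r) (hM : 2 * (M : ℝ) ^ 2 ≤ r ^ 2) :
    |trapezoidal_error (circleArc r) M 0 M| ≤ 1 / 4 := by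
  obtain rfl | hMpos := Nat.eq_zero_or_pos M
  · simp
  have hmem {x : ℝ} (hx : x ∈ Set.Icc 0 (M : ℝ)) : 2 * x ^ 2 ≤ r ^ 2 := by
    have : x ^ 2 ≤ (M : ℝ) ^ 2 := pow_le_pow_left₀ hx.1 hx.2 2
    linarith
  have hlt {x : ℝ} (hx : x ∈ Set.Icc 0 (M : ℝ)) : x ^ 2 < r ^ 2 :=
    sq_lt_sq_of_two_mul_sq_le hr (hmem hx)
  have hbound : ∀ x ∈ Set.Icc 0 (M : ℝ), |-r ^ 2 / circleArc r x ^ 3| ≤ 3 / r := by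
    intro x hx
    have := circleArc_pos (hlt hx)
    rw [neg_div, abs_neg, abs_of_pos (by positivity)]
    exact (sq_div_circleArc_cube_mem_Icc hr (hmem hx)).2
  refine (abs_trapezoidal_error_le_of_hasDerivAt hMpos M.cast_nonneg
    (fun x hx ↦ hasDerivAt_circleArc (hlt hx))
    (fun x hx ↦ hasDerivAt_neg_div_circleArc (hlt hx)) hbound).trans ?_
  have hMr : (M : ℝ) ≤ r := by nlinarith [sq_nonneg (M : ℝ)]
  have : (0 : ℝ) < M := by exact_mod_cast hMpos
  calc ((M : ℝ) - 0) ^ 3 * (3 / r) / (12 * (M : ℝ) ^ 2) = M / r / 4 := by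
        field_simp
        ring
    _ ≤ 1 / 4 := by
        gcongr
        exact (div_le_one hr).mpr hMr

lemma abs_sum_circleArc_sub_le (hr : 0 < r) (hM : 2 * (M : ℝ) ^ 2 ≤ r ^ 2)
    (hM' : r ^ 2 ≤ 2 * ((M : ℝ) + 1) ^ 2) :
    |∑ n ∈ Ico 1 (M + 1), circleArc r n -
      (π * r ^ 2 / 8 + (M : ℝ) ^ 2 / 2 + M / 2 - r / 2)| ≤ 2 := by
  obtain ⟨c, hc, hrc⟩ : ∃ c : ℝ, 0 ≤ c ∧ 2 * c ^ 2 = r ^ 2 :=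
    ⟨√(r ^ 2 / 2), sqrt_nonneg _, by rw [sq_sqrt (by positivity)]; ring⟩
  have hMc : (M : ℝ) ≤ c := by rw [← sq_le_sq₀ M.cast_nonneg hc]; linarith
  have hcM : c ≤ M + 1 := by rw [← sq_le_sq₀ hc (by positivity)]; linarith
  have hcont := continuous_circleArc r
  have hzero : circleArc r 0 = r := by
    rw [circleArc, zero_pow two_ne_zero, sub_zero, sqrt_sq hr.le]
  have htrap := abs_trapezoidal_error_circleArc_le hr hM
  rw [trapezoidal_error, trapezoidal_integral_zero_natCast, hzero] at htrap
  have hsplit := intervalIntegral.integral_add_adjacent_intervals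
    (μ := MeasureTheory.volume) (hcont.intervalIntegrable 0 M) (hcont.intervalIntegrable M c)
  rw [integral_circleArc_of_two_mul_sq_eq hr.le hc hrc] at hsplit
  have hrest := abs_integral_circleArc_sub_le M.cast_nonneg hMc hcM hrc
  have hend := abs_circleArc_sub_le M.cast_nonneg hMc hrc
  have hfrac : 0 ≤ (c - M) * (1 - (c - M)) := mul_nonneg (by linarith) (by linarith)
  have hfrac' : (c - M) * (1 - (c - M)) ≤ 1 / 4 := by nlinarith [sq_nonneg (c - M - 1 / 2)]
  rw [abs_le] at htrap hrest hend ⊢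
  constructor <;> nlinarith

end CircleArc

/-! ### Lattice points in a quarter disc -/

section QuarterDisc

/-- The points of `ℤ²` in the quarter disc `0 < a`, `0 ≤ b`, `a² + b² ≤ r²`; the rotations of this
set by multiples of a right angle partition the nonzero lattice points of the disc. -/
noncomputable def quarterDisc (r : ℝ) : Finset (ℕ × ℕ) :=
  {p ∈ Icc 1 ⌊r⌋₊ ×ˢ range (⌊r⌋₊ + 1) | (p.1 : ℝ) ^ 2 + (p.2 : ℝ) ^ 2 ≤ r ^ 2}

variable {r : ℝ} {M : ℕ}

lemma mem_quarterDisc (hr : 0 ≤ r) {p : ℕ × ℕ} :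
    p ∈ quarterDisc r ↔ 1 ≤ p.1 ∧ (p.1 : ℝ) ^ 2 + (p.2 : ℝ) ^ 2 ≤ r ^ 2 := by
  simp only [quarterDisc, mem_filter, mem_product, mem_Icc, mem_range, Nat.lt_add_one_iff,
    Nat.le_floor_iff hr]
  refine ⟨fun h ↦ ⟨h.1.1.1, h.2⟩, fun h ↦ ⟨⟨⟨h.1, ?_⟩, ?_⟩, h.2⟩⟩ <;>
    exact le_of_sq_le_sq (by nlinarith [h.2, sq_nonneg (p.1 : ℝ), sq_nonneg (p.2 : ℝ)]) hr

lemma le_floor_circleArc_iff {a b : ℕ} (ha : (a : ℝ) ^ 2 ≤ r ^ 2) :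
    b ≤ ⌊circleArc r a⌋₊ ↔ (a : ℝ) ^ 2 + (b : ℝ) ^ 2 ≤ r ^ 2 := by
  rw [Nat.le_floor_iff (circleArc_nonneg r a), circleArc,
    le_sqrt b.cast_nonneg (sub_nonneg.mpr ha), le_sub_iff_add_le, add_comm]

lemma two_mul_natCast_sq_le_of_le (hM : 2 * (M : ℝ) ^ 2 ≤ r ^ 2) {n : ℕ} (hn : n ≤ M) :
    2 * (n : ℝ) ^ 2 ≤ r ^ 2 :=
  le_trans (by gcongr) hM

lemma card_filter_fst_le_quarterDisc (hr : 0 ≤ r) (hM : 2 * (M : ℝ) ^ 2 ≤ r ^ 2) :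
    #{p ∈ quarterDisc r | p.1 ≤ M} = ∑ a ∈ Ico 1 (M + 1), (⌊circleArc r a⌋₊ + 1) := by
  rw [card_eq_sum_ones, sum_finset_product _ (Ico 1 (M + 1)) fun a ↦ range (⌊circleArc r a⌋₊ + 1)]
  · simp only [← card_eq_sum_ones, card_range]
  · rintro ⟨a, b⟩
    simp only [mem_filter, mem_quarterDisc hr, mem_Ico, mem_range, Nat.lt_add_one_iff]
    rw [and_right_comm]
    refine and_congr_right fun ⟨_, ha⟩ ↦ (le_floor_circleArc_iff ?_).symm
    linarith [two_mul_natCast_sq_le_of_le hM ha, sq_nonneg (a : ℝ)]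

lemma card_filter_lt_fst_quarterDisc (hr : 0 ≤ r) (hM : 2 * (M : ℝ) ^ 2 ≤ r ^ 2)
    (hM' : r ^ 2 < 2 * ((M : ℝ) + 1) ^ 2) :
    #{p ∈ quarterDisc r | ¬p.1 ≤ M} = ∑ b ∈ range (M + 1), (⌊circleArc r b⌋₊ - M) := by
  rw [card_eq_sum_ones, sum_finset_product_right _ (range (M + 1)) fun b ↦ Ioc M ⌊circleArc r b⌋₊]
  · simp only [← card_eq_sum_ones, Nat.card_Ioc]
  · rintro ⟨a, b⟩
    simp only [mem_filter, mem_quarterDisc hr, mem_Ioc, mem_range, Nat.lt_add_one_iff, not_le]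
    have hfloor (hb : b ≤ M) : a ≤ ⌊circleArc r b⌋₊ ↔ (b : ℝ) ^ 2 + (a : ℝ) ^ 2 ≤ r ^ 2 :=
      le_floor_circleArc_iff (by linarith [two_mul_natCast_sq_le_of_le hM hb, sq_nonneg (b : ℝ)])
    constructor
    · rintro ⟨⟨_, hab⟩, hMa⟩
      have hb : b ≤ M := by
        by_contra! hMb
        have hMa' : (M : ℝ) + 1 ≤ a := by exact_mod_cast hMa
        have hMb' : (M : ℝ) + 1 ≤ b := by exact_mod_cast hMb
        nlinarith
      exact ⟨hb, hMa, (hfloor hb).mpr (by linarith)⟩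
    · rintro ⟨hb, hMa, ha⟩
      exact ⟨⟨by omega, by linarith [(hfloor hb).mp ha]⟩, hMa⟩

lemma card_quarterDisc_add_sq (hr : 0 ≤ r) (hM : 2 * (M : ℝ) ^ 2 ≤ r ^ 2)
    (hM' : r ^ 2 < 2 * ((M : ℝ) + 1) ^ 2) :
    #(quarterDisc r) + M ^ 2 = 2 * ∑ a ∈ Ico 1 (M + 1), ⌊circleArc r a⌋₊ + ⌊r⌋₊ := by
  have hle : ∀ b ∈ range (M + 1), M ≤ ⌊circleArc r b⌋₊ := by
    intro b hb
    have hMsq : 0 ≤ (M : ℝ) ^ 2 := sq_nonneg _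
    have hb' := two_mul_natCast_sq_le_of_le hM (Nat.lt_add_one_iff.mp (mem_range.mp hb))
    exact (le_floor_circleArc_iff (by linarith)).mpr (by linarith)
  have hsub : ∑ b ∈ range (M + 1), (⌊circleArc r b⌋₊ - M) + (M + 1) * M =
      ∑ b ∈ range (M + 1), ⌊circleArc r b⌋₊ := by
    rw [← card_range (M + 1), ← smul_eq_mul, ← sum_const, card_range, ← sum_add_distrib]
    exact sum_congr rfl fun b hb ↦ Nat.sub_add_cancel (hle b hb)
  have hzero : ⌊circleArc r (0 : ℕ)⌋₊ = ⌊r⌋₊ := by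
    rw [circleArc, Nat.cast_zero, zero_pow two_ne_zero, sub_zero, sqrt_sq hr]
  have hsum : ∑ b ∈ range (M + 1), ⌊circleArc r b⌋₊ =
      ⌊r⌋₊ + ∑ b ∈ Ico 1 (M + 1), ⌊circleArc r b⌋₊ := by
    rw [range_eq_Ico, sum_eq_sum_Ico_succ_bot M.succ_pos, hzero]
  rw [hsum, ← card_filter_lt_fst_quarterDisc hr hM hM'] at hsub
  have hfst := card_filter_fst_le_quarterDisc hr hM
  rw [sum_add_distrib, sum_const, Nat.card_Ico, Nat.add_sub_cancel, smul_eq_mul, mul_one] at hfst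
  have htotal := card_filter_add_card_filter_not (s := quarterDisc r) (fun p ↦ p.1 ≤ M)
  nlinarith

lemma abs_card_quarterDisc_sub_le (hr : 1 ≤ r) :
    |(#(quarterDisc r) : ℝ) - π * r ^ 2 / 4| ≤ 319 * r ^ (2 / 3 : ℝ) := by
  have hr0 : 0 < r := by linarith
  have hsq : 2 * √(r ^ 2 / 2) ^ 2 = r ^ 2 := by rw [sq_sqrt (by positivity)]; ring
  obtain ⟨M, hM, hM'⟩ : ∃ M : ℕ, 2 * (M : ℝ) ^ 2 ≤ r ^ 2 ∧ r ^ 2 < 2 * ((M : ℝ) + 1) ^ 2 := by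
    refine ⟨⌊√(r ^ 2 / 2)⌋₊, hsq.le.trans' ?_, hsq.ge.trans_lt ?_⟩ <;> gcongr
    · exact Nat.floor_le (sqrt_nonneg _)
    · exact Nat.lt_floor_add_one _
  have hcard : (#(quarterDisc r) : ℝ) + (M : ℝ) ^ 2 =
      2 * ∑ a ∈ Ico 1 (M + 1), (⌊circleArc r a⌋₊ : ℝ) + ⌊r⌋₊ := by
    exact_mod_cast card_quarterDisc_add_sq hr0.le hM hM'
  have hfloor : ∑ a ∈ Ico 1 (M + 1), (⌊circleArc r a⌋₊ : ℝ) = ∑ a ∈ Ico 1 (M + 1), circleArc r a -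
      ∑ a ∈ Ico 1 (M + 1), (Int.fract (circleArc r a) - 1 / 2) - M / 2 := by
    have hterm (a : ℕ) : (⌊circleArc r a⌋₊ : ℝ) =
        circleArc r a - (Int.fract (circleArc r a) - 1 / 2) - 1 / 2 := by
      rw [natCast_floor_eq_intCast_floor (circleArc_nonneg r a), ← Int.self_sub_fract]
      ring
    simp only [hterm, sum_sub_distrib _ fun _ ↦ (1 / 2 : ℝ), sum_sub_distrib, sum_const,
      Nat.card_Ico, Nat.add_sub_cancel, nsmul_eq_mul]
    ring
  have hfract := abs_sum_fract_circleArc_sub_half_le hr hM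
  have harc := abs_sum_circleArc_sub_le hr0 hM hM'.le
  have hfloor_le := Nat.floor_le hr0.le
  have hlt_floor := Nat.lt_floor_add_one r
  have hone : 1 ≤ r ^ (2 / 3 : ℝ) := one_le_rpow hr (by norm_num)
  rw [abs_le] at hfract harc ⊢
  constructor <;> linarith

end QuarterDisc

/-! ### Ideals of the Gaussian integers -/

section GaussianIdeals

/-- The basis `1, √d` of the free abelian group `ℤ[√d]`, for computing norms as determinants. -/
noncomputable def zsqrtdBasis (d : ℤ) : Module.Basis (Fin 2) ℤ (ℤ√d) :=
  Module.Basis.ofEquivFun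
    { toFun := fun z ↦ ![z.re, z.im]
      invFun := fun v ↦ ⟨v 0, v 1⟩
      map_add' := fun z w ↦ by ext i; fin_cases i <;> simp
      map_smul' := fun n z ↦ by ext i; fin_cases i <;> simp
      left_inv := fun z ↦ by simp
      right_inv := fun v ↦ by ext i; fin_cases i <;> simp }

lemma algebraNorm_zsqrtd {d : ℤ} (z : ℤ√d) : Algebra.norm ℤ z = z.norm := by
  rw [Algebra.norm_eq_matrix_det (zsqrtdBasis d), Matrix.det_fin_two, Zsqrtd.norm_def]
  simp [Algebra.leftMulMatrix_eq_repr_mul, zsqrtdBasis]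

lemma normI_span_singleton (z : GaussianInt) : (normI (Ideal.span {z}) : ℤ) = z.norm := by
  have : Module.Free ℤ GaussianInt := .of_basis (zsqrtdBasis (-1))
  have : Module.Finite ℤ GaussianInt := .of_basis (zsqrtdBasis (-1))
  rw [normI, ← Submodule.cardQuot_apply, ← Ideal.absNorm_apply, Ideal.absNorm_span_singleton,
    algebraNorm_zsqrtd, GaussianInt.abs_natCast_norm]

lemma gaussianInt_eq_of_isUnit {u : GaussianInt} (hu : IsUnit u) :
    u = ⟨1, 0⟩ ∨ u = ⟨-1, 0⟩ ∨ u = ⟨0, 1⟩ ∨ u = ⟨0, -1⟩ := by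
  have hnorm := (Zsqrtd.norm_eq_one_iff' (by norm_num) u).mpr hu
  rw [Zsqrtd.norm_def] at hnorm
  obtain ⟨a, b⟩ := u
  dsimp only at hnorm
  have ha : |a| ≤ 1 := abs_le_one_iff_mul_self_le_one.mpr (by linarith [mul_self_nonneg b])
  have hb : |b| ≤ 1 := abs_le_one_iff_mul_self_le_one.mpr (by linarith [mul_self_nonneg a])
  rw [abs_le] at ha hb
  obtain ⟨ha, ha'⟩ := ha
  obtain ⟨hb, hb'⟩ := hb
  interval_cases a <;> interval_cases b <;> simp_all

lemma associated_gaussianInt_rotation (a b : ℤ) :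
    Associated (⟨-b, a⟩ : GaussianInt) ⟨a, b⟩ := by
  have hunit : IsUnit (⟨0, -1⟩ : GaussianInt) :=
    (Zsqrtd.norm_eq_one_iff' (by norm_num) _).mp (by simp [Zsqrtd.norm_def])
  exact ⟨hunit.unit, by ext <;> simp⟩

lemma exists_natCast_associated {z : GaussianInt} (hz : z ≠ 0) :
    ∃ a b : ℕ, 1 ≤ a ∧ Associated (⟨a, b⟩ : GaussianInt) z := by
  suffices ∃ a b : ℤ, 0 < a ∧ 0 ≤ b ∧ Associated (⟨a, b⟩ : GaussianInt) z by
    obtain ⟨a, b, ha, hb, hab⟩ := this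
    lift a to ℕ using ha.le
    lift b to ℕ using hb
    exact ⟨a, b, by omega, hab⟩
  obtain ⟨a, b⟩ := z
  have hab : a ≠ 0 ∨ b ≠ 0 := by
    by_contra! h
    exact hz (Zsqrtd.ext h.1 h.2)
  have hrot := associated_gaussianInt_rotation a b
  have hrot₂ := (associated_gaussianInt_rotation (-b) a).trans hrot
  have hrot₃ := (associated_gaussianInt_rotation (-a) (-b)).trans hrot₂
  rw [neg_neg] at hrot₃
  obtain h | h | h | h : (0 < a ∧ 0 ≤ b) ∨ (b < 0 ∧ 0 ≤ a) ∨ (a < 0 ∧ b ≤ 0) ∨ (0 < b ∧ a ≤ 0) := by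
    omega
  · exact ⟨a, b, h.1, h.2, .refl _⟩
  · exact ⟨-b, a, by omega, h.2, hrot⟩
  · exact ⟨-a, -b, by omega, by omega, hrot₂⟩
  · exact ⟨b, -a, h.1, by omega, hrot₃⟩

lemma eq_of_associated_natCast {a b c d : ℕ} (ha : 1 ≤ a) (hc : 1 ≤ c)
    (h : Associated (⟨a, b⟩ : GaussianInt) ⟨c, d⟩) : a = c ∧ b = d := by
  obtain ⟨u, hu⟩ := h
  have hre := congrArg Zsqrtd.re hu
  have him := congrArg Zsqrtd.im hu
  obtain hu | hu | hu | hu := gaussianInt_eq_of_isUnit u.isUnit <;> rw [hu] at hre him <;>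
    simp only [Zsqrtd.re_mul, Zsqrtd.im_mul] at hre him <;> omega

/-- The nonzero ideals of `ℤ[i]` of norm at most `x`. -/
def idealsOfNormLE (x : ℝ) : Set (Ideal GaussianInt) := {I | I ≠ ⊥ ∧ (normI I : ℝ) ≤ x}

lemma normI_span_natCast (a b : ℕ) :
    (normI (Ideal.span {(⟨a, b⟩ : GaussianInt)}) : ℝ) = (a : ℝ) ^ 2 + (b : ℝ) ^ 2 := by
  have h : (normI (Ideal.span {(⟨a, b⟩ : GaussianInt)}) : ℤ) = (a : ℤ) ^ 2 + (b : ℤ) ^ 2 := by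
    rw [normI_span_singleton, Zsqrtd.norm_def]
    ring
  exact_mod_cast h

lemma bijOn_span_quarterDisc {r : ℝ} (hr : 0 ≤ r) :
    Set.BijOn (fun p : ℕ × ℕ ↦ Ideal.span {(⟨p.1, p.2⟩ : GaussianInt)}) (quarterDisc r)
      (idealsOfNormLE (r ^ 2)) := by
  refine ⟨?_, ?_, ?_⟩
  · rintro ⟨a, b⟩ hab
    obtain ⟨ha, hab⟩ := (mem_quarterDisc hr).mp hab
    refine ⟨fun h ↦ ?_, (normI_span_natCast a b).trans_le hab⟩
    have hre := congrArg Zsqrtd.re (Ideal.span_singleton_eq_bot.mp h)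
    simp only [Zsqrtd.re_zero] at hre ha
    omega
  · rintro ⟨a, b⟩ hab ⟨c, d⟩ hcd h
    exact Prod.ext_iff.mpr (eq_of_associated_natCast ((mem_quarterDisc hr).mp hab).1
      ((mem_quarterDisc hr).mp hcd).1 (Ideal.span_singleton_eq_span_singleton.mp h))
  · rintro I ⟨hI, hnorm⟩
    obtain ⟨z, rfl⟩ := (IsPrincipalIdealRing.principal I).principal
    have hz : z ≠ 0 := fun h ↦ hI (Ideal.span_singleton_eq_bot.mpr h)
    obtain ⟨a, b, ha, hab⟩ := exists_natCast_associated hz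
    have hspan := Ideal.span_singleton_eq_span_singleton.mpr hab
    refine ⟨(a, b), (mem_quarterDisc hr).mpr ⟨ha, ?_⟩, hspan⟩
    rw [← normI_span_natCast, hspan]
    exact hnorm

lemma abs_ncard_idealsOfNormLE_sub_le {x : ℝ} (hx : 1 ≤ x) :
    |((idealsOfNormLE x).ncard : ℝ) - π * x / 4| ≤ 319 * x ^ (1 / 3 : ℝ) := by
  have h := abs_card_quarterDisc_sub_le (one_le_sqrt.mpr hx)
  have hrpow : √x ^ (2 / 3 : ℝ) = x ^ (1 / 3 : ℝ) := by
    rw [sqrt_eq_rpow, ← rpow_mul (by positivity)]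
    norm_num
  rwa [← Set.ncard_coe_finset, (bijOn_span_quarterDisc (sqrt_nonneg x)).ncard_eq,
    sq_sqrt (by positivity), hrpow] at h

lemma ncard_P (x : ℝ) : (P x).ncard = (idealsOfNormLE x).ncard ^ 2 := by
  have hprod : P x = idealsOfNormLE x ×ˢ idealsOfNormLE x := by
    ext p
    simp only [P, idealsOfNormLE, Set.mem_ofPred_eq, Set.mem_prod]
    tauto
  rw [hprod, Set.ncard_prod, sq]

end GaussianIdeals

theorem pairCount_asymptotic :
    ∃ C : ℝ, 0 < C ∧ ∀ x : ℝ, 1 ≤ x →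
      |((P x).ncard : ℝ) - π ^ 2 * x ^ 2 / 16| ≤ C * x ^ ((4 : ℝ) / 3) := by
  refine ⟨319 * 321, by norm_num, fun x hx ↦ ?_⟩
  have hx0 : 0 < x := by linarith
  have hideals := abs_ncard_idealsOfNormLE_sub_le hx
  have hrpow : x ^ (1 / 3 : ℝ) ≤ x := rpow_le_self_of_one_le hx (by norm_num)
  rw [ncard_P, Nat.cast_pow]
  generalize ((idealsOfNormLE x).ncard : ℝ) = N at *
  have hsum : |N + π * x / 4| ≤ 321 * x := by
    have hmain : 0 ≤ π * x / 4 ∧ π * x / 4 ≤ x := ⟨by positivity, by nlinarith [pi_le_four]⟩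
    rw [abs_le] at hideals ⊢
    constructor <;> linarith
  calc |N ^ 2 - π ^ 2 * x ^ 2 / 16| = |N - π * x / 4| * |N + π * x / 4| := by
        rw [← abs_mul]
        ring_nf
    _ ≤ (319 * x ^ (1 / 3 : ℝ)) * (321 * x) := by gcongr
    _ = 319 * 321 * (x ^ (1 / 3 : ℝ) * x ^ (1 : ℝ)) := by rw [rpow_one]; ring
    _ = 319 * 321 * x ^ ((4 : ℝ) / 3) := by rw [← rpow_add hx0]; norm_num
end

section
/- For every nonzero ideal K of ℤ[i] and every real x ≥ 0, the number of pairs (I, J) of nonzero ideals of ℤ[i] with N(I) ≤ x, N(J) ≤ x and I ⊔ J = K equals the number of pairs (I', J') of nonzero ideals of ℤ[i] with N(I') ≤ x/N(K), N(J') ≤ x/N(K) and I' ⊔ J' = ⊤. -/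
section Dedekind

variable {R α : Type*} [CommRing R]

/-- The pairs of nonzero ideals whose norms, measured by `N`, are at most `x` and whose greatest
common divisor is `K`. The counts compared by the theorem are the cardinalities of such sets. -/
def gcdPairs [LE α] (N : Ideal R → α) (x : α) (K : Ideal R) : Set (Ideal R × Ideal R) :=
  {p | p.1 ≠ ⊥ ∧ p.2 ≠ ⊥ ∧ N p.1 ≤ x ∧ N p.2 ≤ x ∧ p.1 ⊔ p.2 = K}

variable [IsDedekindDomain R]

lemma ideal_mul_sup_mul_eq_left_iff {K : Ideal R} (hK : K ≠ ⊥) (I J : Ideal R) :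
    K * I ⊔ K * J = K ↔ I ⊔ J = ⊤ := by
  rw [← Ideal.mul_sup, mul_eq_left₀ hK, Ideal.one_eq_top]

variable [Semifield α] [LinearOrder α] [IsStrictOrderedRing α] (N : Ideal R →*₀ α) {K : Ideal R}

lemma mul_mem_gcdPairs_iff (hK : 0 < N K) (x : α) (I J : Ideal R) :
    (K * I, K * J) ∈ gcdPairs N x K ↔ (I, J) ∈ gcdPairs N (x / N K) ⊤ := by
  have hK_ne_bot : K ≠ ⊥ := ne_zero_of_map hK.ne'
  simp only [gcdPairs, Set.mem_ofPred_eq, ne_eq, Ideal.mul_eq_bot, hK_ne_bot, false_or, map_mul,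
    le_div_iff₀' hK, ideal_mul_sup_mul_eq_left_iff hK_ne_bot]

lemma image_mul_gcdPairs_top (hK : 0 < N K) (x : α) :
    Prod.map (K * ·) (K * ·) '' gcdPairs N (x / N K) ⊤ = gcdPairs N x K := by
  apply Set.Subset.antisymm
  · rintro _ ⟨⟨I, J⟩, hIJ, rfl⟩
    exact (mul_mem_gcdPairs_iff N hK x I J).mpr hIJ
  · rintro ⟨I, J⟩ hIJ
    have hgcd : I ⊔ J = K := hIJ.2.2.2.2
    obtain ⟨I', rfl⟩ : K ∣ I := Ideal.dvd_iff_le.mpr (le_sup_left.trans_eq hgcd)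
    obtain ⟨J', rfl⟩ : K ∣ J := Ideal.dvd_iff_le.mpr (le_sup_right.trans_eq hgcd)
    exact ⟨(I', J'), (mul_mem_gcdPairs_iff N hK x I' J').mp hIJ, rfl⟩

-- `encard` because for a general `N` these sets may be infinite, where `ncard` is `0`.
theorem gcdPairCount_eq_coprimePairCount_general (hK : 0 < N K) (x : α) :
    (gcdPairs N x K).encard = (gcdPairs N (x / N K) ⊤).encard := by
  have hmul : Function.Injective (K * ·) := mul_right_injective₀ (ne_zero_of_map hK.ne')
  rw [← image_mul_gcdPairs_top N hK x, (hmul.prodMap hmul).encard_image]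

end Dedekind

section AbsNorm

variable {R : Type*} [CommRing R] [IsDedekindDomain R] [Module.Free ℤ R]

variable (R) in
/-- The absolute norm as a real-valued map, so that it can be compared with real bounds and divided
by. -/
noncomputable def realAbsNorm : Ideal R →*₀ ℝ :=
  (Nat.castRingHom ℝ).toMonoidWithZeroHom.comp Ideal.absNorm

lemma realAbsNorm_pos [Module.Finite ℤ R] {I : Ideal R} (hI : I ≠ ⊥) : 0 < realAbsNorm R I :=
  Nat.cast_pos.mpr (Nat.pos_of_ne_zero (mt Ideal.absNorm_eq_zero_iff.mp hI))

end AbsNorm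

section Zsqrtd

variable (d : ℤ)

/-- The coordinates of `a + b√d` as a `ℤ`-linear equivalence; they make `ℤ√d` free of finite rank,
as the theory of `Ideal.absNorm` requires. -/
def zsqrtdLinearEquivProd : ℤ√d ≃ₗ[ℤ] ℤ × ℤ where
  toFun z := (z.re, z.im)
  invFun p := ⟨p.1, p.2⟩
  map_add' _ _ := rfl
  map_smul' _ _ := by ext <;> simp

instance zsqrtd_module_free : Module.Free ℤ (ℤ√d) :=
  .of_equiv (zsqrtdLinearEquivProd d).symm

instance zsqrtd_module_finite : Module.Finite ℤ (ℤ√d) :=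
  .equiv (zsqrtdLinearEquivProd d).symm

end Zsqrtd

theorem gcdPairCount_eq_coprimePairCount (K : Ideal GaussianInt) (hK : K ≠ ⊥)
    (x : ℝ) (hx : 0 ≤ x) :
    {p : Ideal GaussianInt × Ideal GaussianInt | p.1 ≠ ⊥ ∧ p.2 ≠ ⊥ ∧
        (normI p.1 : ℝ) ≤ x ∧ (normI p.2 : ℝ) ≤ x ∧ p.1 ⊔ p.2 = K}.ncard =
    {p : Ideal GaussianInt × Ideal GaussianInt | p.1 ≠ ⊥ ∧ p.2 ≠ ⊥ ∧
        (normI p.1 : ℝ) ≤ x / (normI K : ℝ) ∧ (normI p.2 : ℝ) ≤ x / (normI K : ℝ) ∧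
        p.1 ⊔ p.2 = ⊤}.ncard :=
  -- `normI` and `Ideal.absNorm` both unfold to the cardinality of the quotient.
  congrArg ENat.toNat
    (gcdPairCount_eq_coprimePairCount_general (realAbsNorm GaussianInt) (realAbsNorm_pos hK) x)
end
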